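/- Let q be a prime power with q ≥ 5 and let P be a closed point of degree 3 of P² over F_q not contained in any F_q-rational line, given by a point p ∈ P²(F_{q³}) whose Frobenius orbit {p, φ(p), φ²(p)} has exactly 3 elements, these three points being non-collinear. Then for every nonzero homogeneous polynomial f ∈ F_q[x,y,z] of degree 5 vanishing at p, the number of points [a:b:c] ∈ P²(F_q) with f(a,b,c) = 0 is at most 4q + 2. -/

import Mathlib

open MvPolynomial

noncomputable section

/-!
Choose a tangent line at every rational point of a curve of degree `d + 1` containing no rational
line. By Bézout, a line carries at most `d + 1` of the points, counted twice where it was chosen.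
Counting along the lines through a rational point, the number of points is `d * q + d + 1 - δ`,
where `δ` is the total amount by which these lines fall short of `d + 1` points. The chosen line
falls short, and counting how the chosen lines meet gives `δ ≥ 3` for large `d`, except possibly
for quartics, where `δ = 2` would make all points come in pairs with a common bitangent. Then the
number of points, hence `q`, is even; but in characteristic two the bitangents of a quartic solve a
Frobenius-semilinear equation, which has too few solutions.

A curve containing a line splits as that line and a curve of smaller degree, which still passes
through the given point since no line defined over the base field does.
-/

section TangentSystem

open Configuration Finset ProjectivePlane
open scoped Classical

variable {P L : Type*} [Membership P L]

/-- The pencil of lines through the point `A`. -/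
def linesThrough (L : Type*) [Membership P L] [Finite L] (A : P) : Finset L :=
  (Set.toFinite {l : L | A ∈ l}).toFinset

/-- A choice of lines `T A` through the points `A` of `K` under which every line satisfies Bézout's
inequality in degree `d`, each point counting twice on the line chosen for it. The motivating case
is a choice of tangent lines at the rational points of a plane curve containing no line. -/
structure IsTangentSystem (K : Finset P) (T : P → L) (d : ℕ) : Prop where
  mem : ∀ A ∈ K, A ∈ T A
  card_add_card_le : ∀ l, #{x ∈ K | x ∈ l} + #{A ∈ K | T A = l} ≤ d

/-- The number of points of `K` which the line `l` lacks to reach the maximum `d` (and `0` if it has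
more than `d`). -/
def deficiency (K : Finset P) (d : ℕ) (l : L) : ℕ :=
  d - #{x ∈ K | x ∈ l}

@[simp]
lemma mem_linesThrough [Finite L] {A : P} {l : L} : l ∈ linesThrough L A ↔ A ∈ l := by
  simp [linesThrough]

section ProjectivePlane

variable [ProjectivePlane P L] [Finite L] {K : Finset P} {A : P}

lemma card_filter_mem_linesThrough_of_ne {x : P} (hx : x ≠ A) :
    #{l ∈ linesThrough L A | x ∈ l} = 1 := by
  refine card_eq_one.2 ⟨HasLines.mkLine hx, ?_⟩
  have hmk := HasLines.mkLine_ax (L := L) hx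
  ext l
  simp only [mem_filter, mem_linesThrough, mem_singleton]
  exact ⟨fun h ↦ (Nondegenerate.eq_or_eq h.1 h.2 hmk.2 hmk.1).resolve_left hx.symm,
    fun h ↦ h ▸ hmk.symm⟩

variable [Finite P]

lemma card_linesThrough (A : P) : #(linesThrough L A) = order P L + 1 := by
  rw [← lineCount_eq (L := L) A, lineCount, Nat.subtype_card _ fun _ ↦ mem_linesThrough]

lemma sum_linesThrough_card (hA : A ∈ K) :
    ∑ l ∈ linesThrough L A, #{x ∈ K | x ∈ l} = #K + order P L := by
  calc ∑ l ∈ linesThrough L A, #{x ∈ K | x ∈ l}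
      = ∑ x ∈ K, #{l ∈ linesThrough L A | x ∈ l} :=
        (sum_card_bipartiteAbove_eq_sum_card_bipartiteBelow fun x l ↦ x ∈ l).symm
    _ = #{l ∈ linesThrough L A | A ∈ l} + ∑ x ∈ K.erase A, 1 := by
        rw [← add_sum_erase _ _ hA]
        exact congrArg _ <| sum_congr rfl fun x hx ↦
          card_filter_mem_linesThrough_of_ne (ne_of_mem_erase hx)
    _ = #K + order P L := by
        rw [filter_true_of_mem fun l ↦ mem_linesThrough.1, card_linesThrough, ← card_eq_sum_ones,
          ← card_erase_add_one hA]
        ring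

lemma card_le_sum_linesThrough_card (K : Finset P) (A : P) :
    #K ≤ ∑ l ∈ linesThrough L A, #{x ∈ K | x ∈ l} := by
  calc #K = ∑ x ∈ K, 1 := card_eq_sum_ones K
    _ ≤ ∑ x ∈ K, #{l ∈ linesThrough L A | x ∈ l} := sum_le_sum fun x _ ↦ ?_
    _ = ∑ l ∈ linesThrough L A, #{x ∈ K | x ∈ l} :=
        sum_card_bipartiteAbove_eq_sum_card_bipartiteBelow fun x l ↦ x ∈ l
  obtain rfl | hx := eq_or_ne x A
  · rw [filter_true_of_mem fun l ↦ mem_linesThrough.1, card_linesThrough]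
    exact Nat.le_add_left _ _
  · exact (card_filter_mem_linesThrough_of_ne hx).ge

end ProjectivePlane

namespace IsTangentSystem

variable {K : Finset P} {T : P → L} {d δ : ℕ} {A : P}

lemma card_add_deficiency (h : IsTangentSystem K T d) (l : L) :
    #{x ∈ K | x ∈ l} + deficiency K d l = d :=
  Nat.add_sub_cancel' <| (Nat.le_add_right _ _).trans (h.card_add_card_le l)

lemma card_le_deficiency (h : IsTangentSystem K T d) (l : L) :
    #{A ∈ K | T A = l} ≤ deficiency K d l := by
  have := h.card_add_card_le l
  have := h.card_add_deficiency l
  lia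

lemma deficiency_pos (h : IsTangentSystem K T d) (hA : A ∈ K) : 0 < deficiency K d (T A) :=
  (card_pos.2 ⟨A, by simp [hA]⟩).trans_le (h.card_le_deficiency _)

variable [ProjectivePlane P L] [Finite P] [Finite L]

lemma card_add_sum_deficiency (h : IsTangentSystem K T d) (hA : A ∈ K) :
    #K + order P L + ∑ l ∈ linesThrough L A, deficiency K d l = d * (order P L + 1) := by
  rw [← sum_linesThrough_card hA, ← sum_add_distrib,
    sum_congr rfl fun l _ ↦ h.card_add_deficiency l, sum_const, card_linesThrough, smul_eq_mul,
    mul_comm]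

section Total

variable (h : IsTangentSystem K T d) (hδ : #K + order P L + δ = d * (order P L + 1))
include h hδ

lemma sum_deficiency (hA : A ∈ K) : ∑ l ∈ linesThrough L A, deficiency K d l = δ := by
  have := h.card_add_sum_deficiency hA
  lia

lemma deficiency_le (hA : A ∈ K) {l : L} (hl : A ∈ l) : deficiency K d l ≤ δ := by
  rw [← h.sum_deficiency hδ hA]
  exact single_le_sum_of_canonicallyOrdered (mem_linesThrough.2 hl)

lemma deficiency_add_deficiency_le (hA : A ∈ K) {l m : L} (hl : A ∈ l) (hm : A ∈ m) (hlm : l ≠ m) :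
    deficiency K d l + deficiency K d m ≤ δ := by
  rw [← h.sum_deficiency hδ hA, ← sum_pair hlm]
  exact sum_le_sum_of_subset (by simp [insert_subset_iff, hl, hm])

lemma eq_of_mem_of_deficiency_eq (hAδ : deficiency K d (T A) = δ) {B : P} (hB : B ∈ K)
    (hBA : B ∈ T A) : T B = T A := by
  by_contra hne
  have := h.deficiency_add_deficiency_le hδ hB (h.mem B hB) hBA hne
  have := h.deficiency_pos hB
  lia

lemma le_two_mul_of_deficiency_eq (hAδ : deficiency K d (T A) = δ) : d ≤ 2 * δ := by
  have hsub : #{B ∈ K | B ∈ T A} ≤ #{B ∈ K | T B = T A} := card_le_card fun B hB ↦ by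
    simp only [mem_filter] at hB ⊢
    exact ⟨hB.1, h.eq_of_mem_of_deficiency_eq hδ hAδ hB.1 hB.2⟩
  have := h.card_add_deficiency (T A)
  have := h.card_le_deficiency (T A)
  lia

lemma one_le_total (hK : K.Nonempty) : 1 ≤ δ := by
  obtain ⟨A, hA⟩ := hK
  exact (h.deficiency_pos hA).trans_le (h.deficiency_le hδ hA (h.mem A hA))

lemma two_le_total (hK : K.Nonempty) (hd : 3 ≤ d) : 2 ≤ δ := by
  obtain ⟨A, hA⟩ := hK
  have hpos := h.deficiency_pos hA
  have hle := h.deficiency_le hδ hA (h.mem A hA)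
  by_contra! hδ2
  have := h.le_two_mul_of_deficiency_eq hδ (A := A) (by lia)
  lia

end Total

section TotalEqTwo

variable (h : IsTangentSystem K T d) (hδ : #K + order P L + 2 = d * (order P L + 1))
include h hδ

lemma deficiency_eq_one_of_mem {l : L} (hl : deficiency K d l = 1) (hA : A ∈ K) (hAl : A ∈ l) :
    deficiency K d (T A) = 1 := by
  by_cases hTA : T A = l
  · rwa [hTA]
  · have := h.deficiency_add_deficiency_le hδ hA (h.mem A hA) hAl hTA
    have := h.deficiency_pos hA
    lia

lemma card_filter_deficiency_eq_one_le (S : Finset L) (hS : ∀ l ∈ S, deficiency K d l = 1)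
    (hA : A ∈ K) : #{l ∈ S | A ∈ l} ≤ 2 := by
  calc #{l ∈ S | A ∈ l} = ∑ l ∈ S with A ∈ l, deficiency K d l := by
        rw [card_eq_sum_ones]
        exact sum_congr rfl fun l hl ↦ (hS l (mem_filter.1 hl).1).symm
    _ ≤ ∑ l ∈ linesThrough L A, deficiency K d l :=
        sum_le_sum_of_subset fun l hl ↦ mem_linesThrough.2 (mem_filter.1 hl).2
    _ = 2 := h.sum_deficiency hδ hA

-- The lines of deficiency `1` chosen by `T` are each chosen once and have `d - 1` points, all of
-- which choose a line of deficiency `1`. But such a point lies on at most two such lines.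
lemma deficiency_eq_two (hd : 4 ≤ d) (hA : A ∈ K) : deficiency K d (T A) = 2 := by
  set K₁ : Finset P := {A ∈ K | deficiency K d (T A) = 1} with hK₁
  have hinj : Set.InjOn T K₁ := by
    intro A hA B hB hAB
    simp only [hK₁, coe_filter, Set.mem_ofPred_eq] at hA hB
    exact card_le_one.1 ((h.card_le_deficiency (T A)).trans hA.2.le) A (by simp [hA.1]) B
      (by simp [hB.1, hAB])
  have hS : ∀ l ∈ K₁.image T, deficiency K d l = 1 :=
    forall_mem_image.2 fun A hA ↦ (mem_filter.1 hA).2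
  have hpoints : ∀ l ∈ K₁.image T, d - 1 = #{x ∈ K₁ | x ∈ l} := fun l hl ↦ by
    have hfilter : {x ∈ K₁ | x ∈ l} = {x ∈ K | x ∈ l} := by
      simp only [hK₁, filter_filter]
      exact filter_congr fun x hx ↦ and_iff_right_of_imp <|
        h.deficiency_eq_one_of_mem hδ (hS l hl) hx
    have := h.card_add_deficiency l
    rw [hS l hl] at this
    rw [hfilter]
    lia
  have hcount : #K₁ * (d - 1) ≤ #K₁ * 2 := by
    calc #K₁ * (d - 1) = ∑ l ∈ K₁.image T, #{x ∈ K₁ | x ∈ l} := by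
          rw [← sum_congr rfl hpoints, sum_const, card_image_of_injOn hinj, smul_eq_mul]
      _ = ∑ x ∈ K₁, #{l ∈ K₁.image T | x ∈ l} :=
          (sum_card_bipartiteAbove_eq_sum_card_bipartiteBelow fun x l ↦ x ∈ l).symm
      _ ≤ #K₁ * 2 := sum_le_card_nsmul _ _ _ fun x hx ↦
          h.card_filter_deficiency_eq_one_le hδ _ hS (filter_subset _ _ hx)
  have hempty : A ∉ K₁ := fun hA ↦ by
    have := Nat.le_of_mul_le_mul_left hcount (card_pos.2 ⟨A, hA⟩)
    lia
  have hne : deficiency K d (T A) ≠ 1 := fun h1 ↦ hempty (mem_filter.2 ⟨hA, h1⟩)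
  have := h.deficiency_pos hA
  have := h.deficiency_le hδ hA (h.mem A hA)
  lia

end TotalEqTwo

lemma three_le_total (h : IsTangentSystem K T d) (hδ : #K + order P L + δ = d * (order P L + 1))
    (hK : K.Nonempty) (hd : 5 ≤ d) : 3 ≤ δ := by
  obtain rfl | hδ2 := (h.two_le_total hδ hK (by lia)).eq_or_lt
  · obtain ⟨A, hA⟩ := hK
    have := h.le_two_mul_of_deficiency_eq hδ (h.deficiency_eq_two hδ (by lia) hA)
    lia
  · exact hδ2

theorem card_add_min_two_le (h : IsTangentSystem K T (d + 1)) (hd : 1 ≤ d) :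
    #K + min d 2 ≤ d * order P L + d + 1 := by
  obtain rfl | hK := K.eq_empty_or_nonempty
  · simp; lia
  obtain ⟨A, hA⟩ := id hK
  have hδ := h.card_add_sum_deficiency hA
  have hone := h.one_le_total hδ hK
  have htwo : 3 ≤ d + 1 → _ := h.two_le_total hδ hK
  lia

theorem card_add_min_three_le (h : IsTangentSystem K T (d + 1)) (hd : 1 ≤ d)
    (hquartic : d = 3 → #K ≠ 3 * order P L + 2) : #K + min d 3 ≤ d * order P L + d + 1 := by
  obtain rfl | hK := K.eq_empty_or_nonempty
  · simp; lia
  obtain ⟨A, hA⟩ := id hK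
  have hδ := h.card_add_sum_deficiency hA
  have htwo := h.card_add_min_two_le hd
  have hthree : 5 ≤ d + 1 → _ := h.three_le_total hδ hK
  lia

section Quartic

variable (h : IsTangentSystem K T 4) (hK : #K = 3 * order P L + 2)
include h hK

lemma filter_mem_eq_filter_eq (hA : A ∈ K) : {B ∈ K | B ∈ T A} = {B ∈ K | T B = T A} := by
  have hδ : #K + order P L + 2 = 4 * (order P L + 1) := by lia
  exact filter_congr fun B hB ↦
    ⟨h.eq_of_mem_of_deficiency_eq hδ (h.deficiency_eq_two hδ le_rfl hA) hB,
      fun hBA ↦ hBA ▸ h.mem B hB⟩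

lemma card_filter_eq_eq_two (hA : A ∈ K) : #{B ∈ K | T B = T A} = 2 := by
  have hδ : #K + order P L + 2 = 4 * (order P L + 1) := by lia
  have := h.card_add_deficiency (T A)
  rw [← h.filter_mem_eq_filter_eq hK hA]
  rw [h.deficiency_eq_two hδ le_rfl hA] at this
  lia

lemma card_eq_two_mul_card_image : #K = 2 * #(K.image T) := by
  rw [card_eq_sum_card_image T K, sum_const_nat fun l hl ↦ ?_, mul_comm]
  obtain ⟨A, hA, rfl⟩ := mem_image.1 hl
  exact h.card_filter_eq_eq_two hK hA

end Quartic

end IsTangentSystem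

end TangentSystem

section Homogeneous

variable {σ R : Type*} {d : ℕ}

section CommSemiring

variable [CommSemiring R] {f : MvPolynomial σ R}

lemma eval_smul_of_isHomogeneous (hf : f.IsHomogeneous d) (s : R) (a : σ → R) :
    eval (s • a) f = s ^ d * eval a f := by
  simp only [eval_eq, Finset.mul_sum, Pi.smul_apply, smul_eq_mul, mul_pow, Finset.prod_mul_distrib,
    Finset.prod_pow_eq_pow_sum]
  refine Finset.sum_congr rfl fun m hm ↦ ?_
  rw [hf.degree_eq_sum_deg_support hm]
  ring

lemma eval_zero_of_isHomogeneous_succ (hf : f.IsHomogeneous (d + 1)) : eval 0 f = 0 := by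
  simpa using eval_smul_of_isHomogeneous hf 0 0

lemma coeff_prod_sum_of_natDegree_le {ι : Type*} (s : Finset ι) (g : ι → Polynomial R) (m : ι → ℕ)
    (hg : ∀ i, (g i).natDegree ≤ m i) :
    (∏ i ∈ s, g i).coeff (∑ i ∈ s, m i) = ∏ i ∈ s, (g i).coeff (m i) := by
  classical
  induction s using Finset.induction_on with
  | empty => simp
  | insert i s hi ih =>
    rw [Finset.prod_insert hi, Finset.sum_insert hi, Finset.prod_insert hi, ← ih]
    refine Polynomial.coeff_mul_add_eq_of_natDegree_le (hg i) ?_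
    exact (Polynomial.natDegree_prod_le s g).trans (Finset.sum_le_sum fun i _ ↦ hg i)

lemma coeff_aeval_of_isHomogeneous (hf : f.IsHomogeneous d) (g : σ → Polynomial R)
    (hg : ∀ i, (g i).natDegree ≤ 1) :
    (aeval g f).coeff d = eval (fun i ↦ (g i).coeff 1) f := by
  rw [aeval_def, eval₂_eq, eval_eq, Polynomial.finsetSum_coeff]
  refine Finset.sum_congr rfl fun m hm ↦ ?_
  have hpow (i) : (g i ^ m i).natDegree ≤ m i := by
    simpa using Polynomial.natDegree_pow_le_of_le (m i) (hg i)
  rw [Polynomial.algebraMap_eq, Polynomial.coeff_C_mul, hf.degree_eq_sum_deg_support hm,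
    coeff_prod_sum_of_natDegree_le _ _ _ hpow]
  congr! 2 with i
  simpa using Polynomial.coeff_pow_of_natDegree_le (m := m i) (hg i)

lemma eval_aeval (a : σ → R) (s : σ → MvPolynomial σ R) (f : MvPolynomial σ R) :
    eval a (aeval s f) = eval (fun i ↦ eval a (s i)) f := by
  simpa only [aeval_eq_eval, coe_aeval_eq_eval] using comp_aeval_apply s (aeval a) f

end CommSemiring

section Gradient

variable [CommSemiring R]

/-- The vector of partial derivatives of `f` at `a`. -/
def formalGradient (f : MvPolynomial σ R) (a : σ → R) : σ → R :=
  fun i ↦ eval a (pderiv i f)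

lemma formalGradient_X [DecidableEq σ] (i : σ) (a : σ → R) :
    formalGradient (X i) a = Pi.single i 1 :=
  funext fun j ↦ by
    simp only [formalGradient, pderiv_X, Pi.single_apply, apply_ite (eval a), map_one, map_zero,
      eq_comm]

lemma formalGradient_mul (f g : MvPolynomial σ R) (a : σ → R) :
    formalGradient (f * g) a = eval a f • formalGradient g a + eval a g • formalGradient f a :=
  funext fun i ↦ by simp [formalGradient]

variable {f : MvPolynomial σ R}

lemma formalGradient_smul (hf : f.IsHomogeneous d) (s : R) (a : σ → R) :
    formalGradient f (s • a) = s ^ (d - 1) • formalGradient f a :=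
  funext fun _ ↦ eval_smul_of_isHomogeneous hf.pderiv s a

variable [Fintype σ]

lemma formalGradient_dotProduct_self (hf : f.IsHomogeneous d) (a : σ → R) :
    formalGradient f a ⬝ᵥ a = d * eval a f := by
  simpa [dotProduct, formalGradient, mul_comm] using congrArg (eval a) hf.sum_X_mul_pderiv

lemma derivative_aeval (f : MvPolynomial σ R) (g : σ → Polynomial R) :
    Polynomial.derivative (aeval g f) =
      ∑ i, aeval g (pderiv i f) * Polynomial.derivative (g i) := by
  classical
  induction f using MvPolynomial.induction_on with
  | C c => simp [Polynomial.algebraMap_eq]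
  | add p q hp hq => simp only [map_add, hp, hq, add_mul, Finset.sum_add_distrib]
  | mul_X p j hp =>
    have hX (i) : aeval g (pderiv i (X j : MvPolynomial σ R)) = if i = j then 1 else 0 := by
      rw [pderiv_X, Pi.single_apply]
      simp only [apply_ite (aeval g), map_one, map_zero, eq_comm]
    simp only [map_mul, aeval_X, Polynomial.derivative_mul, hp, pderiv_mul, map_add, hX, mul_ite,
      mul_one, mul_zero, add_mul, ite_mul, zero_mul, Finset.sum_add_distrib, Finset.sum_mul,
      Finset.sum_ite_eq', Finset.mem_univ, if_true]
    simp only [mul_right_comm]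

end Gradient

section Line

variable [CommSemiring R]

/-- The polynomial `f (a + t b)` in `t`. -/
def lineRestriction (f : MvPolynomial σ R) (a b : σ → R) : Polynomial R :=
  aeval (fun i ↦ Polynomial.C (b i) * Polynomial.X + Polynomial.C (a i)) f

variable {f : MvPolynomial σ R}

lemma eval_lineRestriction (f : MvPolynomial σ R) (a b : σ → R) (t : R) :
    (lineRestriction f a b).eval t = eval (a + t • b) f := by
  have h := comp_aeval_apply (fun i ↦ Polynomial.C (b i) * Polynomial.X + Polynomial.C (a i))
    (Polynomial.aeval t) f
  simp only [Polynomial.coe_aeval_eq_eval, aeval_eq_eval] at h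
  rw [lineRestriction, h]
  congr
  ext i
  simp [add_comm (a i), mul_comm t]

lemma eval_derivative_lineRestriction [Fintype σ] (f : MvPolynomial σ R) (a b : σ → R) (t : R) :
    (lineRestriction f a b).derivative.eval t = formalGradient f (a + t • b) ⬝ᵥ b := by
  rw [lineRestriction, derivative_aeval, Polynomial.eval_finsetSum]
  simp only [← lineRestriction.eq_def, Polynomial.eval_mul, eval_lineRestriction]
  simp [dotProduct, formalGradient]

lemma natDegree_lineRestriction_le (hf : f.IsHomogeneous d) (a b : σ → R) :
    (lineRestriction f a b).natDegree ≤ d := by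
  simpa [lineRestriction] using aeval_natDegree_le f hf.totalDegree_le _ fun i ↦
    Polynomial.natDegree_linear_le (a := b i) (b := a i)

lemma coeff_lineRestriction (hf : f.IsHomogeneous d) (a b : σ → R) :
    (lineRestriction f a b).coeff d = eval b f := by
  rw [lineRestriction, coeff_aeval_of_isHomogeneous hf _ fun i ↦ Polynomial.natDegree_linear_le]
  simp

end Line

section LinearForm

variable [Fintype σ]

section CommSemiring

variable [CommSemiring R]

/-- The linear form with coefficient vector `n`, as a polynomial. -/
def linearForm (n : σ → R) : MvPolynomial σ R :=
  ∑ i, n i • X i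

lemma isHomogeneous_linearForm (n : σ → R) : (linearForm n).IsHomogeneous 1 :=
  (homogeneousSubmodule σ R 1).sum_mem fun i _ ↦ Submodule.smul_mem _ _ (isHomogeneous_X R i)

lemma aeval_linearForm {A : Type*} [CommSemiring A] [Algebra R A] (n : σ → R) (v : σ → A) :
    aeval v (linearForm n) = ∑ i, n i • v i := by
  simp [linearForm]

lemma eval_linearForm (n a : σ → R) : eval a (linearForm n) = n ⬝ᵥ a :=
  aeval_linearForm n a

lemma exists_eq_linearForm_of_isHomogeneous_one {f : MvPolynomial σ R} (hf : f.IsHomogeneous 1) :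
    ∃ n, f = linearForm n := by
  rw [← mem_homogeneousSubmodule, homogeneousSubmodule_one_eq_span_X,
    Submodule.mem_span_range_iff_exists_fun] at hf
  exact hf.imp fun _ ↦ Eq.symm

lemma exists_isHomogeneous_of_linearForm_dvd {f : MvPolynomial σ R} {n : σ → R}
    (hf : f.IsHomogeneous (d + 1)) (h : linearForm n ∣ f) :
    ∃ g : MvPolynomial σ R, g.IsHomogeneous d ∧ f = linearForm n * g := by
  obtain ⟨g, hg⟩ := h
  refine ⟨homogeneousComponent d g, homogeneousComponent_isHomogeneous d g, ?_⟩
  let := gradedAlgebra (σ := σ) (R := R)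
  have hdecompose (p : MvPolynomial σ R) (i : ℕ) :
      (DirectSum.decompose (homogeneousSubmodule σ R) p i : MvPolynomial σ R) =
        homogeneousComponent i p :=
    decomposition.decompose'_apply p i
  have h := DirectSum.coe_decompose_mul_of_left_mem_of_le (homogeneousSubmodule σ R) (b := g)
    (isHomogeneous_linearForm n) (Nat.le_add_left 1 d)
  rwa [hdecompose, hdecompose, Nat.add_sub_cancel, ← hg, homogeneousComponent_eq_self hf] at h

end CommSemiring

variable {K : Type*} [Field K] [Finite K]

-- The substitution `s` projects onto the hyperplane `n ⬝ᵥ x = 0`, so it kills `f` as a function,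
-- hence as a polynomial because the degree is small; and it is the identity modulo `linearForm n`.
lemma linearForm_dvd_of_forall_eval_eq_zero {f : MvPolynomial σ K} {n : σ → K}
    (hf : f.IsHomogeneous d) (hd : d ≤ Nat.card K) (hn : n ≠ 0)
    (h : ∀ x, n ⬝ᵥ x = 0 → eval x f = 0) : linearForm n ∣ f := by
  classical
  obtain ⟨j, hj : n j ≠ 0⟩ := Function.ne_iff.1 hn
  let e : σ → K := Pi.single j (n j)⁻¹
  let s (i : σ) : MvPolynomial σ K := X i - C (e i) * linearForm n
  have hs_eval (r : σ → K) (i : σ) : eval r (s i) = (r - (n ⬝ᵥ r) • e) i := by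
    simp [s, eval_linearForm, mul_comm]
  have hs_hom (i : σ) : (s i).IsHomogeneous 1 :=
    (isHomogeneous_X K i).sub ((isHomogeneous_linearForm n).C_mul _)
  have hs_zero : aeval s f = 0 := by
    have hhom : (aeval s f).IsHomogeneous d := by simpa using hf.aeval s hs_hom
    refine hhom.eq_zero_of_forall_eval_eq_zero_of_le_card (fun r ↦ ?_) ?_
    · rw [eval_aeval, funext (hs_eval r)]
      refine h _ ?_
      simp [e, dotProduct_sub, hj]
    · rwa [← Nat.cast_card, Nat.cast_le]
  have hs_mod : (Ideal.Quotient.mkₐ K (Ideal.span {linearForm n})).comp (aeval s) =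
      Ideal.Quotient.mkₐ K (Ideal.span {linearForm n}) := by
    ext i
    rw [AlgHom.comp_apply, aeval_X, Ideal.Quotient.mkₐ_eq_mk, Ideal.Quotient.mk_eq_mk_iff_sub_mem,
      Ideal.mem_span_singleton]
    simp [s]
  have := DFunLike.congr_fun hs_mod f
  rwa [AlgHom.comp_apply, hs_zero, map_zero, eq_comm, Ideal.Quotient.mkₐ_eq_mk,
    Ideal.Quotient.eq_zero_iff_dvd] at this

end LinearForm

lemma card_add_card_le_natDegree {K : Type*} [CommRing K] [IsDomain K] {p : Polynomial K}
    (hp : p ≠ 0) {S D : Finset K} (hDS : D ⊆ S) (hS : ∀ t ∈ S, p.IsRoot t)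
    (hD : ∀ t ∈ D, p.derivative.IsRoot t) : S.card + D.card ≤ p.natDegree := by
  classical
  have hle : S.val + D.val ≤ p.roots := by
    refine Multiset.le_iff_count.2 fun t ↦ ?_
    have hcountS := Multiset.nodup_iff_count_le_one.1 S.nodup t
    have hcountD := Multiset.nodup_iff_count_le_one.1 D.nodup t
    rw [Multiset.count_add, Polynomial.count_roots]
    by_cases htD : t ∈ D
    · have := (Polynomial.one_lt_rootMultiplicity_iff_isRoot hp).2 ⟨hS t (hDS htD), hD t htD⟩
      lia
    rw [Multiset.count_eq_zero.2 (show t ∉ D.val from htD)]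
    by_cases htS : t ∈ S
    · exact hcountS.trans ((Polynomial.rootMultiplicity_pos hp).2 (hS t htS))
    · simp [Multiset.count_eq_zero.2 (show t ∉ S.val from htS)]
  simpa using (Multiset.card_le_card hle).trans p.card_roots'

end Homogeneous

section PlaneCurve

open Configuration Finset ProjectivePlane
open scoped Classical LinearAlgebra.Projectivization

variable {F : Type*} [Field F] {f : MvPolynomial (Fin 3) F} {d : ℕ} {l x : ℙ F (Fin 3 → F)}

lemma mem_iff_rep_dotProduct_rep : x ∈ l ↔ x.rep ⬝ᵥ l.rep = 0 := by
  rw [ofField.mem_iff, ← Projectivization.orthogonal_mk x.rep_nonzero l.rep_nonzero, x.mk_rep,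
    l.mk_rep]

lemma mk_mem_iff {v : Fin 3 → F} (hv : v ≠ 0) :
    Projectivization.mk F v hv ∈ l ↔ v ⬝ᵥ l.rep = 0 := by
  rw [ofField.mem_iff, ← Projectivization.orthogonal_mk hv l.rep_nonzero, l.mk_rep]

lemma mem_span_pair_of_dotProduct_eq_zero {n a b c : Fin 3 → F} (hn : n ≠ 0)
    (hab : LinearIndependent F ![a, b]) (ha : a ⬝ᵥ n = 0) (hb : b ⬝ᵥ n = 0) (hc : c ⬝ᵥ n = 0) :
    c ∈ Submodule.span F {a, b} := by
  by_contra hspan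
  have hli : LinearIndependent F (Matrix.of ![c, a, b]).row :=
    linearIndependent_finCons.2 ⟨hab, by simpa [Matrix.range_cons, Set.pair_comm] using hspan⟩
  rw [Matrix.linearIndependent_rows_iff_isUnit, Matrix.isUnit_iff_isUnit_det,
    isUnit_iff_ne_zero] at hli
  refine hn (Matrix.eq_zero_of_mulVec_eq_zero hli (funext fun i ↦ ?_))
  fin_cases i <;> simpa

lemma rep_add_smul_rep_ne_zero {a b : ℙ F (Fin 3 → F)} (hab : a ≠ b) (t : F) :
    a.rep + t • b.rep ≠ 0 := fun h ↦ by
  have hli := Projectivization.linearIndependent_pair_iff_ne.2 hab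
  exact one_ne_zero (LinearIndependent.pair_iff.1 hli 1 t (by rwa [one_smul])).1

lemma exists_mk_rep_add_smul_rep_eq {a b : ℙ F (Fin 3 → F)} (hab : a ≠ b) (ha : a ∈ l)
    (hb : b ∈ l) (hx : x ∈ l) (hxb : x ≠ b) :
    ∃ t, Projectivization.mk F (a.rep + t • b.rep) (rep_add_smul_rep_ne_zero hab t) = x := by
  rw [mem_iff_rep_dotProduct_rep] at ha hb hx
  have hspan := mem_span_pair_of_dotProduct_eq_zero l.rep_nonzero
    (Projectivization.linearIndependent_pair_iff_ne.2 hab) ha hb hx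
  obtain ⟨r, s, hrs⟩ := Submodule.mem_span_pair.1 hspan
  have hr : r ≠ 0 := by
    rintro rfl
    refine hxb ?_
    rw [← x.mk_rep, ← b.mk_rep, Projectivization.mk_eq_mk_iff']
    exact ⟨s, by simpa using hrs⟩
  refine ⟨s / r, ?_⟩
  rw [← x.mk_rep, Projectivization.mk_eq_mk_iff']
  exact ⟨r⁻¹, by rw [← hrs, smul_add, smul_smul, smul_smul, inv_mul_cancel₀ hr, one_smul,
    div_eq_inv_mul]⟩

lemma eval_rep_mk_eq_zero_iff (hf : f.IsHomogeneous d) {v : Fin 3 → F} (hv : v ≠ 0) :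
    eval (Projectivization.mk F v hv).rep f = 0 ↔ eval v f = 0 := by
  obtain ⟨u, hu⟩ := Projectivization.exists_smul_eq_mk_rep F v hv
  rw [← hu, Units.smul_def, eval_smul_of_isHomogeneous hf]
  simp

/-- The line `l` is tangent at `x` to the curve `f = 0`: it passes through `x` and the differential
of `f` at `x` vanishes on it. At a singular point of the curve, every line is tangent. -/
def IsTangentLineAt (f : MvPolynomial (Fin 3) F) (x l : ℙ F (Fin 3 → F)) : Prop :=
  x ∈ l ∧ ∀ y : Fin 3 → F, y ⬝ᵥ l.rep = 0 → formalGradient f x.rep ⬝ᵥ y = 0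

lemma isTangentLineAt_mk_iff (hf : f.IsHomogeneous d) {v : Fin 3 → F} (hv : v ≠ 0) :
    IsTangentLineAt f (Projectivization.mk F v hv) l ↔
      v ⬝ᵥ l.rep = 0 ∧ ∀ y, y ⬝ᵥ l.rep = 0 → formalGradient f v ⬝ᵥ y = 0 := by
  obtain ⟨u, hu⟩ := Projectivization.exists_smul_eq_mk_rep F v hv
  rw [IsTangentLineAt, mk_mem_iff, ← hu, Units.smul_def, formalGradient_smul hf]
  simp

variable [Finite F]

lemma exists_isTangentLineAt (hf : f.IsHomogeneous d) (hx : eval x.rep f = 0) :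
    ∃ l, IsTangentLineAt f x l := by
  by_cases hgrad : formalGradient f x.rep = 0
  · obtain ⟨⟨l, hl⟩⟩ := Finite.card_pos_iff.1 <|
      two_pos.trans (two_lt_lineCount (ℙ F (Fin 3 → F)) x)
    exact ⟨l, hl, fun y _ ↦ by rw [hgrad, zero_dotProduct]⟩
  · let l := Projectivization.mk F _ hgrad
    obtain ⟨u, hu : u • _ = l.rep⟩ := Projectivization.exists_smul_eq_mk_rep F _ hgrad
    have hperp (y : Fin 3 → F) : y ⬝ᵥ l.rep = 0 ↔ formalGradient f x.rep ⬝ᵥ y = 0 := by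
      rw [← hu, dotProduct_smul, smul_eq_zero_iff_eq, dotProduct_comm]
    refine ⟨l, ?_, fun y ↦ (hperp y).1⟩
    rw [mem_iff_rep_dotProduct_rep, hperp, formalGradient_dotProduct_self hf, hx, mul_zero]

lemma exists_mem_mem (l m : ℙ F (Fin 3 → F)) : ∃ x, x ∈ l ∧ x ∈ m := by
  obtain rfl | hlm := eq_or_ne l m
  · obtain ⟨⟨x, hx⟩⟩ := Finite.card_pos_iff.1 <|
      two_pos.trans (two_lt_pointCount (ℙ F (Fin 3 → F)) l)
    exact ⟨x, hx, hx⟩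
  · exact ⟨_, HasPoints.mkPoint_ax hlm⟩

/-- The rational points of the plane projective curve `f = 0`. -/
def rationalPoints (f : MvPolynomial (Fin 3) F) : Finset (ℙ F (Fin 3 → F)) :=
  (Set.toFinite {x : ℙ F (Fin 3 → F) | eval x.rep f = 0}).toFinset

@[simp]
lemma mem_rationalPoints : x ∈ rationalPoints f ↔ eval x.rep f = 0 := by
  simp [rationalPoints]

/-- The curve `f = 0` contains no rational line, at least as far as rational points can tell. -/
def IsLineFree (f : MvPolynomial (Fin 3) F) : Prop :=
  ∀ l : ℙ F (Fin 3 → F), ∃ x ∈ l, x ∉ rationalPoints f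

lemma order_projectivization :
    order (ℙ F (Fin 3 → F)) (ℙ F (Fin 3 → F)) = Nat.card F := by
  have : Fintype (ℙ F (Fin 3 → F)) := Fintype.ofFinite _
  have hplane := card_points (ℙ F (Fin 3 → F)) (ℙ F (Fin 3 → F))
  have hcard := Projectivization.card_of_finrank F (Fin 3 → F) (n := 3) (by simp)
  rw [← Nat.card_eq_fintype_card, hcard] at hplane
  simp only [Finset.sum_range_succ, Finset.range_zero, Finset.sum_empty] at hplane
  have hmono : StrictMono fun n : ℕ ↦ n ^ 2 + n + 1 := fun m n hmn ↦ by
    dsimp only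
    nlinarith
  exact hmono.injective (show _ ^ 2 + _ + 1 = _ ^ 2 + _ + 1 by lia)

-- Bézout for a line: restricted to it, `f` is a nonzero polynomial of degree at most `d` which
-- vanishes at the points of the curve, and doubly where the line is tangent.
lemma card_filter_mem_add_card_filter_isTangentLineAt_le (hf : f.IsHomogeneous d)
    {b : ℙ F (Fin 3 → F)} (hbl : b ∈ l) (hbf : b ∉ rationalPoints f) :
    #{x ∈ rationalPoints f | x ∈ l} + #{x ∈ rationalPoints f | IsTangentLineAt f x l} ≤ d := by
  obtain ⟨a, hal, hab⟩ : ∃ a ∈ l, a ≠ b := by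
    have hl := two_lt_pointCount (ℙ F (Fin 3 → F)) l
    have := Finite.one_lt_card_iff_nontrivial.1 (one_lt_two.trans hl)
    obtain ⟨a, ha⟩ := exists_ne (⟨b, hbl⟩ : {p // p ∈ l})
    exact ⟨a, a.2, fun h ↦ ha (Subtype.ext h)⟩
  rw [mem_rationalPoints] at hbf
  let point (t : F) := Projectivization.mk F (a.rep + t • b.rep) (rep_add_smul_rep_ne_zero hab t)
  let p := lineRestriction f a.rep b.rep
  have hp : p ≠ 0 := fun h ↦ by
    have hcoeff := coeff_lineRestriction hf a.rep b.rep
    rw [show lineRestriction f a.rep b.rep = 0 from h, Polynomial.coeff_zero] at hcoeff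
    exact hbf hcoeff.symm
  have hroot {x} (hx : eval x.rep f = 0) (hxl : x ∈ l) : ∃ t, p.IsRoot t ∧ point t = x := by
    obtain ⟨t, rfl⟩ := exists_mk_rep_add_smul_rep_eq hab hal hbl hxl fun h ↦ hbf (h ▸ hx)
    rw [eval_rep_mk_eq_zero_iff hf] at hx
    exact ⟨t, (eval_lineRestriction f a.rep b.rep t).trans hx, rfl⟩
  have hpoints : {x ∈ rationalPoints f | x ∈ l} ⊆ p.roots.toFinset.image point := fun x hx ↦ by
    obtain ⟨hx, hxl⟩ := mem_filter.1 hx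
    obtain ⟨t, ht, rfl⟩ := hroot (mem_rationalPoints.1 hx) hxl
    exact mem_image_of_mem point (by simp [hp, ht.eq_zero])
  have htangent : {x ∈ rationalPoints f | IsTangentLineAt f x l} ⊆
      {t ∈ p.roots.toFinset | p.derivative.IsRoot t}.image point := fun x hx ↦ by
    obtain ⟨hx, hxl⟩ := mem_filter.1 hx
    obtain ⟨t, ht, rfl⟩ := hroot (mem_rationalPoints.1 hx) hxl.1
    rw [isTangentLineAt_mk_iff hf] at hxl
    have hderiv := hxl.2 _ (mem_iff_rep_dotProduct_rep.1 hbl)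
    rw [← eval_derivative_lineRestriction] at hderiv
    exact mem_image_of_mem point (by simp [hp, ht.eq_zero, p, hderiv])
  grw [hpoints, htangent, card_image_le, card_image_le, card_add_card_le_natDegree hp
    (filter_subset _ _) (by simp +contextual) (by simp +contextual)]
  exact natDegree_lineRestriction_le hf _ _

lemma exists_isTangentSystem_isTangentLineAt (hf : f.IsHomogeneous d) (hfree : IsLineFree f) :
    ∃ T : ℙ F (Fin 3 → F) → ℙ F (Fin 3 → F), IsTangentSystem (rationalPoints f) T d ∧
      ∀ x ∈ rationalPoints f, IsTangentLineAt f x (T x) := by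
  choose! T hT using fun x (hx : x ∈ rationalPoints f) ↦
    exists_isTangentLineAt hf (mem_rationalPoints.1 hx)
  refine ⟨T, ⟨fun x hx ↦ (hT x hx).1, fun l ↦ ?_⟩, hT⟩
  obtain ⟨b, hbl, hbf⟩ := hfree l
  grw [← card_filter_mem_add_card_filter_isTangentLineAt_le hf hbl hbf]
  gcongr with x hx
  rintro rfl
  exact hT x hx

end PlaneCurve

section FixedVectors

variable {K V W : Type*} [Field K] {p : ℕ} [Fact p.Prime] [CharP K p] [PerfectRing K p]
  [AddCommGroup V] [Module K V] [Module.Finite K V] [AddCommGroup W] [Module K W]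

-- Coordinates of a solution with respect to independent solutions are fixed by the Frobenius.
lemma ncard_setOf_eq_semilinearMap_le (g : V →ₗ[K] W) (φ : V →ₛₗ[frobenius K p] W)
    (hφ : Function.Injective φ) : {w | g w = φ w}.ncard ≤ p ^ Module.finrank K V := by
  obtain ⟨b, hb, hspan, hli⟩ := exists_linearIndependent K {w | g w = φ w}
  have := hli.setFinite.fintype
  have hliφ : LinearIndependent K (φ ∘ ((↑) : b → V)) :=
    hli.map_of_surjective_injective (frobenius K p) φ.toAddMonoidHom
      (bijective_frobenius K p).surjective (fun _ ↦ (map_eq_zero_iff φ hφ).1) (map_smulₛₗ φ)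
  have hsub : {w | g w = φ w} ⊆
      Set.range fun c : b → (⊥ : Subfield K) ↦ ∑ x, (c x : K) • (x : V) := fun w hw ↦ by
    have hwb := hspan.ge (Submodule.subset_span hw)
    rw [← Subtype.range_coe (s := b), Submodule.mem_span_range_iff_exists_fun] at hwb
    obtain ⟨c, rfl⟩ := hwb
    have hrelation : ∑ x, (c x - c x ^ p) • φ x = 0 := by
      simp only [sub_smul, Finset.sum_sub_distrib]
      simpa [sub_eq_zero, frobenius_def, ← (hb (Subtype.mem _)).symm] using hw
    have hc (x) : c x ^ p = c x :=
      (sub_eq_zero.1 (Fintype.linearIndependent_iff.1 hliφ _ hrelation x)).symm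
    exact ⟨fun x ↦ ⟨c x, (Subfield.mem_bot_iff_pow_eq_self K p).2 (hc x)⟩, rfl⟩
  have : Finite (⊥ : Subfield K) := Nat.finite_of_card_ne_zero <| by
    rw [Subfield.card_bot K p]
    exact (Fact.out : p.Prime).ne_zero
  calc {w | g w = φ w}.ncard
    _ ≤ Nat.card (b → (⊥ : Subfield K)) :=
      (Set.ncard_le_ncard hsub (Set.finite_range _)).trans (Finite.card_range_le _)
    _ = p ^ Fintype.card b := by rw [Nat.card_fun, Subfield.card_bot K p, Nat.card_eq_fintype_card]
    _ ≤ p ^ Module.finrank K V :=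
      Nat.pow_le_pow_right (Fact.out : p.Prime).pos hli.fintype_card_le_finrank

lemma ncard_setOf_eq_pow_le {ι : Type*} [Fintype ι] (g : (ι → K) →ₗ[K] ι → K) :
    {w | g w = w ^ p}.ncard ≤ p ^ Fintype.card ι := by
  let φ : (ι → K) →ₛₗ[frobenius K p] ι → K :=
    { toFun := fun w ↦ w ^ p
      map_add' := fun v w ↦ funext fun i ↦ add_pow_char (v i) (w i) p
      map_smul' := fun c w ↦ mul_pow _ _ _ }
  have hφ : Function.Injective φ := fun v w h ↦
    funext fun i ↦ frobenius_inj K p (congrFun h i)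
  rw [← Module.finrank_fintype_fun_eq_card K]
  exact ncard_setOf_eq_semilinearMap_le g φ hφ

end FixedVectors

section CrossProduct

open scoped Matrix

variable {F : Type*} [Field F] {a n y : Fin 3 → F}

lemma exists_eq_smul_of_cross_eq_zero (hn : n ≠ 0) (h : n ⨯₃ y = 0) : ∃ s : F, y = s • n := by
  by_contra! hy
  exact crossProduct_ne_zero_iff_linearIndependent.2
    ((LinearIndependent.pair_iff' hn).2 fun s ↦ (hy s).symm) h

lemma exists_cross_eq_smul (hn : n ≠ 0) (ha : a ⬝ᵥ n = 0) (hy : y ⬝ᵥ n = 0) :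
    ∃ s : F, a ⨯₃ y = s • n :=
  exists_eq_smul_of_cross_eq_zero hn <| by
    rw [cross_cross_eq_smul_sub_smul', dotProduct_comm n, hy, ha, zero_smul, zero_smul, sub_zero]

lemma exists_cross_eq (ha : a ≠ 0) (han : a ⬝ᵥ n = 0) : ∃ y, y ⬝ᵥ n = 0 ∧ a ⨯₃ y = n := by
  obtain ⟨j, hj : a j ≠ 0⟩ := Function.ne_iff.1 ha
  refine ⟨n ⨯₃ Pi.single j (a j)⁻¹, by rw [dotProduct_comm, dot_self_cross], ?_⟩
  rw [cross_cross_eq_smul_sub_smul', dotProduct_comm n, han]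
  simp [hj]

end CrossProduct

section CharTwoQuartic

open Configuration Finset ProjectivePlane Matrix
open scoped Classical LinearAlgebra.Projectivization

/-- `M` represents the differential of the ternary quartic `f` in characteristic two: it exists
because such an `f` is of the form `∑ k, X k ^ 2 * Q k`, where each `Q k` is a quadratic form, whose
differential at `a` is alternating in `a` and hence the cross product of `a` with a fixed vector. -/
def RepresentsGradient {R : Type*} [CommRing R] (M : Matrix (Fin 3) (Fin 3) R)
    (f : MvPolynomial (Fin 3) R) : Prop :=
  ∀ a, formalGradient f a = (M *ᵥ (a ^ 2)) ⨯₃ a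

section CommRing

variable {R : Type*} [CommRing R]

lemma representsGradient_X_sq_mul_X_mul_X [CharP R 2] (i j k : Fin 3) :
    RepresentsGradient (vecMulVec (Pi.single i 1 ⨯₃ Pi.single j 1) (Pi.single k 1))
      (X k * X k * (X i * X j) : MvPolynomial (Fin 3) R) := fun a ↦ by
  have hgrad : formalGradient (X k * X k * (X i * X j)) a =
      a k ^ 2 • (a i • Pi.single j 1 + a j • Pi.single i 1) := by
    simp [formalGradient_mul, formalGradient_X, CharTwo.add_self_eq_zero, sq]
  rw [hgrad, vecMulVec_mulVec, op_smul_eq_smul]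
  simp [cross_cross_eq_smul_sub_smul, CharTwo.sub_eq_add]

lemma exists_X_mul_X_mul_X_mul_X_eq (i j k l : Fin 3) : ∃ r s t : Fin 3,
    (X i * X j * X k * X l : MvPolynomial (Fin 3) R) = X t * X t * (X r * X s) := by
  have hpigeonhole : i = j ∨ i = k ∨ i = l ∨ j = k ∨ j = l ∨ k = l := by lia
  rcases hpigeonhole with rfl | rfl | rfl | rfl | rfl | rfl
  exacts [⟨k, l, i, by ring⟩, ⟨j, l, i, by ring⟩, ⟨j, k, i, by ring⟩, ⟨i, l, j, by ring⟩,
    ⟨i, k, j, by ring⟩, ⟨i, j, k, by ring⟩]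

lemma exists_representsGradient [CharP R 2] {f : MvPolynomial (Fin 3) R} (hf : f.IsHomogeneous 4) :
    ∃ M, RepresentsGradient M f := by
  rw [← mem_homogeneousSubmodule, ← homogeneousSubmodule_one_pow,
    homogeneousSubmodule_one_eq_span_X] at hf
  simp only [pow_succ, pow_zero, one_mul, Submodule.span_mul_span] at hf
  induction hf using Submodule.span_induction with
  | mem f hf =>
    obtain ⟨_, ⟨_, ⟨_, ⟨i, rfl⟩, _, ⟨j, rfl⟩, rfl⟩, _, ⟨k, rfl⟩, rfl⟩, _, ⟨l, rfl⟩, rfl⟩ := hf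
    obtain ⟨r, s, t, h⟩ := exists_X_mul_X_mul_X_mul_X_eq (R := R) i j k l
    beta_reduce
    rw [h]
    exact ⟨_, representsGradient_X_sq_mul_X_mul_X r s t⟩
  | zero => exact ⟨0, fun a ↦ by ext; simp [formalGradient]⟩
  | add f g _ _ hf hg =>
    obtain ⟨⟨M, hM⟩, N, hN⟩ := And.intro hf hg
    refine ⟨M + N, fun a ↦ ?_⟩
    rw [add_mulVec, map_add, LinearMap.add_apply, ← hM, ← hN]
    exact funext fun _ ↦ by simp [formalGradient]
  | smul c f _ hf =>
    obtain ⟨M, hM⟩ := hf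
    refine ⟨c • M, fun a ↦ ?_⟩
    rw [smul_mulVec, map_smul, LinearMap.smul_apply, ← hM]
    exact funext fun _ ↦ by simp [formalGradient]

end CommRing

variable {F : Type*} [Field F] {f : MvPolynomial (Fin 3) F} {M : Matrix (Fin 3) (Fin 3) F}
  {l m x y : ℙ F (Fin 3 → F)}

lemma RepresentsGradient.dotProduct (hM : RepresentsGradient M f) (a y : Fin 3 → F) :
    formalGradient f a ⬝ᵥ y = ((a ⨯₃ y) ᵥ* M) ⬝ᵥ a ^ 2 := by
  rw [hM, dotProduct_comm, triple_product_permutation, dotProduct_comm, ← dotProduct_mulVec,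
    dotProduct_comm]

lemma RepresentsGradient.isTangentLineAt_iff (hM : RepresentsGradient M f) :
    IsTangentLineAt f x l ↔ x ∈ l ∧ (l.rep ᵥ* M) ⬝ᵥ x.rep ^ 2 = 0 := by
  refine and_congr_right fun hxl ↦ ?_
  rw [mem_iff_rep_dotProduct_rep] at hxl
  simp only [hM.dotProduct]
  refine ⟨fun h ↦ ?_, fun h y hy ↦ ?_⟩
  · obtain ⟨y, hy, hcross⟩ := exists_cross_eq x.rep_nonzero hxl
    exact hcross ▸ h y hy
  · obtain ⟨s, hs⟩ := exists_cross_eq_smul l.rep_nonzero hxl hy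
    rw [hs, smul_vecMul, smul_dotProduct, h, smul_zero]

-- Every line through the intersection point of `l` and `m` is tangent at all of its points, hence
-- contains at most two rational points of the curve.
lemma RepresentsGradient.card_rationalPoints_le [Finite F] (hM : RepresentsGradient M f)
    (hf : f.IsHomogeneous 4) (hfree : IsLineFree f) (hlm : l ≠ m) (hl : l.rep ᵥ* M = 0)
    (hm : m.rep ᵥ* M = 0) : #(rationalPoints f) ≤ (Nat.card F + 1) * 2 := by
  obtain ⟨x, hxl, hxm⟩ := exists_mem_mem l m
  have hpencil {k : ℙ F (Fin 3 → F)} (hxk : x ∈ k) : k.rep ᵥ* M = 0 := by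
    rw [mem_iff_rep_dotProduct_rep, dotProduct_comm] at hxl hxm hxk
    obtain ⟨r, s, hrs⟩ := Submodule.mem_span_pair.1 <|
      mem_span_pair_of_dotProduct_eq_zero x.rep_nonzero
        (Projectivization.linearIndependent_pair_iff_ne.2 hlm) hxl hxm hxk
    rw [← hrs, add_vecMul, smul_vecMul, smul_vecMul, hl, hm, smul_zero, smul_zero, add_zero]
  have hcard (k) (hk : k ∈ linesThrough (ℙ F (Fin 3 → F)) x) :
      #{y ∈ rationalPoints f | y ∈ k} ≤ 2 := by
    obtain ⟨b, hbk, hbf⟩ := hfree k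
    have hbezout := card_filter_mem_add_card_filter_isTangentLineAt_le hf hbk hbf
    simp only [hM.isTangentLineAt_iff, hpencil (mem_linesThrough.1 hk), zero_dotProduct, and_true]
      at hbezout
    lia
  calc #(rationalPoints f)
    _ ≤ ∑ k ∈ linesThrough (ℙ F (Fin 3 → F)) x, #{y ∈ rationalPoints f | y ∈ k} :=
      card_le_sum_linesThrough_card _ _
    _ ≤ #(linesThrough (ℙ F (Fin 3 → F)) x) * 2 := sum_le_card_nsmul _ _ _ hcard
    _ = (Nat.card F + 1) * 2 := by rw [card_linesThrough, order_projectivization]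

lemma exists_sq_eq_and_dotProduct_eq_zero_iff [CharP F 2] [PerfectRing F 2]
    (n : Fin 3 → F) : ∃ r, r ^ 2 = n ∧ ∀ a, a ⬝ᵥ r = 0 ↔ n ⬝ᵥ a ^ 2 = 0 := by
  choose r hr using fun i ↦ surjective_frobenius F 2 (n i)
  refine ⟨r, funext hr, fun a ↦ ?_⟩
  rw [← pow_eq_zero_iff two_ne_zero, dotProduct, sum_pow_char 2]
  simp [dotProduct, ← hr, frobenius_def, mul_pow, mul_comm]

lemma RepresentsGradient.exists_vecMul_rep_eq_smul [CharP F 2] [PerfectRing F 2]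
    (hM : RepresentsGradient M f) (hxy : x ≠ y) (hx : IsTangentLineAt f x l)
    (hy : IsTangentLineAt f y l) : ∃ c : F, l.rep ᵥ* M = c • l.rep ^ 2 := by
  rw [hM.isTangentLineAt_iff, mem_iff_rep_dotProduct_rep] at hx hy
  obtain ⟨r, hr, hperp⟩ := exists_sq_eq_and_dotProduct_eq_zero_iff (l.rep ᵥ* M)
  have hcross := (ofField.crossProduct_eq_zero_of_dotProduct_eq_zero hx.1 hy.1
    ((hperp _).2 hx.2) ((hperp _).2 hy.2)).resolve_left <|
      crossProduct_ne_zero_iff_linearIndependent.2 <|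
        Projectivization.linearIndependent_pair_iff_ne.2 hxy
  obtain ⟨s, rfl⟩ := exists_eq_smul_of_cross_eq_zero l.rep_nonzero hcross
  exact ⟨s ^ 2, by rw [← hr, smul_pow]⟩

lemma card_bitangentLines_le [Finite F] [CharP F 2] (hf : f.IsHomogeneous 4)
    (hfree : IsLineFree f) (hcard : (Nat.card F + 1) * 2 < #(rationalPoints f))
    {B : Finset (ℙ F (Fin 3 → F))}
    (hB : ∀ l ∈ B, ∃ x y, x ≠ y ∧ IsTangentLineAt f x l ∧ IsTangentLineAt f y l) : #B ≤ 9 := by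
  obtain ⟨M, hM⟩ := exists_representsGradient hf
  choose! c hc using fun l hl ↦
    let ⟨_, _, hxy, hx, hy⟩ := hB l hl
    hM.exists_vecMul_rep_eq_smul hxy hx hy
  have hzero : #{l ∈ B | c l = 0} ≤ 1 := by
    refine card_le_one.2 fun l hl m hm ↦ not_imp_comm.1 (fun hlm ↦ ?_) hcard.not_ge
    rw [mem_filter] at hl hm
    exact hM.card_rationalPoints_le hf hfree hlm (by rw [hc l hl.1, hl.2, zero_smul])
      (by rw [hc m hm.1, hm.2, zero_smul])
  have hne : #{l ∈ B | c l ≠ 0} ≤ 8 := by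
    have hmaps : Set.MapsTo (fun l ↦ c l • l.rep) {l | l ∈ B ∧ c l ≠ 0}
        {w : Fin 3 → F | M.vecMulLinear w = w ^ 2} := fun l hl ↦ by
      simp [smul_vecMul, hc l hl.1, smul_smul, sq]
    have hinj : Set.InjOn (fun l ↦ c l • l.rep) {l | l ∈ B ∧ c l ≠ 0} := fun l hl m _ hlm ↦ by
      beta_reduce at hlm
      rw [← l.mk_rep, ← m.mk_rep, Projectivization.mk_eq_mk_iff']
      exact ⟨(c l)⁻¹ * c m, by rw [mul_smul, ← hlm, inv_smul_smul₀ hl.2]⟩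
    rw [← Set.ncard_coe_finset, coe_filter]
    exact (Set.ncard_le_ncard_of_injOn _ hmaps hinj).trans (ncard_setOf_eq_pow_le M.vecMulLinear)
  rw [← card_filter_add_card_filter_not (c · = 0)]
  exact add_le_add hzero hne

lemma card_rationalPoints_ne_of_isHomogeneous_four [Finite F] (hf : f.IsHomogeneous 4)
    (hfree : IsLineFree f) (hF : 5 ≤ Nat.card F) :
    #(rationalPoints f) ≠ 3 * Nat.card F + 2 := fun hcard ↦ by
  obtain ⟨T, hT, htangent⟩ := exists_isTangentSystem_isTangentLineAt hf hfree
  have hcard' : #(rationalPoints f) = 3 * order (ℙ F (Fin 3 → F)) (ℙ F (Fin 3 → F)) + 2 := by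
    rw [hcard, order_projectivization]
  have himage := hT.card_eq_two_mul_card_image hcard'
  have : CharP F 2 := by
    have := Fintype.ofFinite F
    rw [← ringChar.eq_iff, FiniteField.even_card_iff_char_two, ← Nat.card_eq_fintype_card]
    lia
  have hbitangent (l) (hl : l ∈ (rationalPoints f).image T) :
      ∃ x y, x ≠ y ∧ IsTangentLineAt f x l ∧ IsTangentLineAt f y l := by
    obtain ⟨x, hx, rfl⟩ := mem_image.1 hl
    obtain ⟨y, z, hyz, hpair⟩ := card_eq_two.1 (hT.card_filter_eq_eq_two hcard' hx)
    have hmem {y} (hy : y ∈ ({y ∈ rationalPoints f | T y = T x} : Finset _)) :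
        IsTangentLineAt f y (T x) :=
      (mem_filter.1 hy).2 ▸ htangent y (mem_filter.1 hy).1
    exact ⟨y, z, hyz, hmem (by simp [hpair]), hmem (by simp [hpair])⟩
  have := card_bitangentLines_le hf hfree (by lia) hbitangent
  lia

end CharTwoQuartic

section Conclusion

open Configuration Finset ProjectivePlane
open scoped Classical LinearAlgebra.Projectivization

variable {F : Type*} [Field F] {d : ℕ}

lemma aeval_linearForm_ne_zero {σ A : Type*} [Fintype σ] [CommRing A] [Algebra F A] {v : σ → A}
    (hv : LinearIndependent F v) {n : σ → F} (hn : n ≠ 0) : aeval v (linearForm n) ≠ 0 := fun h ↦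
  hn <| funext <| Fintype.linearIndependent_iff.1 hv n <| by rwa [aeval_linearForm] at h

lemma aeval_ne_zero_of_isHomogeneous_one {σ A : Type*} [Finite σ] [CommRing A] [Algebra F A]
    {v : σ → A} (hv : LinearIndependent F v) {f : MvPolynomial σ F} (hf : f.IsHomogeneous 1)
    (hf0 : f ≠ 0) : aeval v f ≠ 0 := by
  have := Fintype.ofFinite σ
  obtain ⟨n, rfl⟩ := exists_eq_linearForm_of_isHomogeneous_one hf
  refine aeval_linearForm_ne_zero hv ?_
  rintro rfl
  exact hf0 (by simp [linearForm])

-- An `F`-linear relation among the `v i` is preserved by every `φ k`, so its coefficient vector is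
-- in the kernel of an invertible matrix.
lemma linearIndependent_of_linearIndependent_algHom_comp {σ A E : Type*} [Finite σ] [CommRing A]
    [Algebra F A] [Field E] [Algebra F E] {v : σ → A} {φ : σ → A →ₐ[F] E}
    (hφ : LinearIndependent E fun k ↦ φ k ∘ v) : LinearIndependent F v := by
  have := Fintype.ofFinite σ
  refine Fintype.linearIndependent_iff.2 fun n hn i ↦ (algebraMap F E).injective ?_
  change LinearIndependent E (Matrix.of fun k ↦ φ k ∘ v).row at hφ
  rw [Matrix.linearIndependent_rows_iff_isUnit, Matrix.isUnit_iff_isUnit_det,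
    isUnit_iff_ne_zero] at hφ
  have hker : (Matrix.of fun k ↦ φ k ∘ v).mulVec (algebraMap F E ∘ n) = 0 := funext fun k ↦ by
    simpa [Matrix.mulVec, dotProduct, Algebra.smul_def, mul_comm] using congrArg (φ k) hn
  simpa using congrFun (Matrix.eq_zero_of_mulVec_eq_zero hφ hker) i

lemma linearIndependent_of_linearIndependent_frobenius [Fintype F] {E : Type*} [Field E]
    [Algebra F E] {v : Fin 3 → E} (hv : LinearIndependent E
      ![v, fun i ↦ v i ^ Fintype.card F, fun i ↦ v i ^ Fintype.card F ^ 2]) :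
    LinearIndependent F v := by
  refine linearIndependent_of_linearIndependent_algHom_comp
    (φ := fun k ↦ FiniteField.frobeniusAlgHom F E ^ (k : ℕ)) ?_
  convert hv using 1
  ext k i
  fin_cases k <;> simp [pow_two, pow_mul]

variable [Finite F] {f g : MvPolynomial (Fin 3) F} {l : ℙ F (Fin 3 → F)}

lemma IsLineFree.card_rationalPoints_add_min_two_le (hf : f.IsHomogeneous (d + 1))
    (hfree : IsLineFree f) (hd : 1 ≤ d) :
    #(rationalPoints f) + min d 2 ≤ d * Nat.card F + d + 1 := by
  obtain ⟨T, hT, -⟩ := exists_isTangentSystem_isTangentLineAt hf hfree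
  simpa only [order_projectivization] using hT.card_add_min_two_le hd

lemma IsLineFree.card_rationalPoints_add_min_three_le (hf : f.IsHomogeneous (d + 1))
    (hfree : IsLineFree f) (hd : 1 ≤ d) (hF : d = 3 → 5 ≤ Nat.card F) :
    #(rationalPoints f) + min d 3 ≤ d * Nat.card F + d + 1 := by
  obtain ⟨T, hT, -⟩ := exists_isTangentSystem_isTangentLineAt hf hfree
  rw [← order_projectivization]
  refine hT.card_add_min_three_le hd ?_
  rintro rfl
  rw [order_projectivization]
  exact card_rationalPoints_ne_of_isHomogeneous_four hf hfree (hF rfl)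

lemma exists_eq_linearForm_mul_of_not_isLineFree (hf : f.IsHomogeneous (d + 1))
    (hd : d + 1 ≤ Nat.card F) (hline : ¬ IsLineFree f) :
    ∃ l : ℙ F (Fin 3 → F), ∃ g : MvPolynomial (Fin 3) F,
      g.IsHomogeneous d ∧ f = linearForm l.rep * g := by
  simp only [IsLineFree, not_forall, not_exists, not_and, not_not, mem_rationalPoints] at hline
  obtain ⟨l, hl⟩ := hline
  refine ⟨l, exists_isHomogeneous_of_linearForm_dvd hf ?_⟩
  refine linearForm_dvd_of_forall_eval_eq_zero hf hd l.rep_nonzero fun x hx ↦ ?_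
  obtain rfl | hx0 := eq_or_ne x 0
  · exact eval_zero_of_isHomogeneous_succ hf
  · rw [dotProduct_comm, ← mk_mem_iff hx0] at hx
    exact (eval_rep_mk_eq_zero_iff hf hx0).1 (hl _ hx)

lemma mem_rationalPoints_linearForm {x : ℙ F (Fin 3 → F)} :
    x ∈ rationalPoints (linearForm l.rep) ↔ x ∈ l := by
  rw [mem_rationalPoints, eval_linearForm, mem_iff_rep_dotProduct_rep, dotProduct_comm]

lemma card_rationalPoints_linearForm : #(rationalPoints (linearForm l.rep)) = Nat.card F + 1 := by
  rw [← order_projectivization, ← pointCount_eq (ℙ F (Fin 3 → F)) l, pointCount,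
    Nat.subtype_card _ fun _ ↦ mem_rationalPoints_linearForm]

lemma rationalPoints_mul : rationalPoints (f * g) = rationalPoints f ∪ rationalPoints g := by
  ext x
  simp

lemma card_rationalPoints_linearForm_mul_le :
    #(rationalPoints (linearForm l.rep * g)) ≤ Nat.card F + 1 + #(rationalPoints g) := by
  grw [rationalPoints_mul, card_union_le, card_rationalPoints_linearForm]

lemma card_rationalPoints_linearForm_mul_le_of_not_isLineFree (hg : ¬ IsLineFree g) :
    #(rationalPoints (linearForm l.rep * g)) ≤ Nat.card F + #(rationalPoints g) := by
  simp only [IsLineFree, not_forall, not_exists, not_and, not_not] at hg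
  obtain ⟨m, hm⟩ := hg
  obtain ⟨x, hxl, hxm⟩ := exists_mem_mem l m
  have hinter : 0 < #(rationalPoints (linearForm l.rep) ∩ rationalPoints g) :=
    card_pos.2 ⟨x, mem_inter.2 ⟨mem_rationalPoints_linearForm.2 hxl, hm x hxm⟩⟩
  have hunion := card_union_add_card_inter (rationalPoints (linearForm l.rep)) (rationalPoints g)
  rw [card_rationalPoints_linearForm] at hunion
  rw [rationalPoints_mul]
  lia

lemma IsLineFree.card_rationalPoints_le (hf : f.IsHomogeneous (d + 1)) (hfree : IsLineFree f)
    (hd : 1 ≤ d) : #(rationalPoints f) ≤ d * Nat.card F + max 2 (d - 2) := by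
  have htwo := hfree.card_rationalPoints_add_min_two_le hf hd
  by_cases hd3 : d = 3
  · lia
  · have hthree := hfree.card_rationalPoints_add_min_three_le hf hd (absurd · hd3)
    lia

theorem stmt_16_general {E : Type*} [CommRing E] [IsDomain E] [Algebra F E]
    {v : Fin 3 → E} (hv : LinearIndependent F v) (hd : d + 1 ≤ Nat.card F) (hf0 : f ≠ 0)
    (hf : f.IsHomogeneous (d + 1)) (hfv : aeval v f = 0) :
    #(rationalPoints f) ≤ d * Nat.card F + max 2 (d - 2) := by
  induction d generalizing f with
  | zero =>
    exact absurd hfv (aeval_ne_zero_of_isHomogeneous_one hv hf hf0)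
  | succ d ih =>
    by_cases hfree : IsLineFree f
    · exact hfree.card_rationalPoints_le hf d.succ_pos
    obtain ⟨l, g, hg, rfl⟩ := exists_eq_linearForm_mul_of_not_isLineFree hf hd hfree
    have hg0 : g ≠ 0 := right_ne_zero_of_mul hf0
    have hgv : aeval v g = 0 := by
      rw [map_mul] at hfv
      exact (mul_eq_zero.1 hfv).resolve_left (aeval_linearForm_ne_zero hv l.rep_nonzero)
    by_cases hgfree : IsLineFree g
    · have hle := card_rationalPoints_linearForm_mul_le (l := l) (g := g)
      have hdpos : d ≠ 0 := by
        rintro rfl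
        exact aeval_ne_zero_of_isHomogeneous_one hv hg hg0 hgv
      have hgle := hgfree.card_rationalPoints_add_min_three_le hg (Nat.pos_of_ne_zero hdpos)
        (by lia)
      lia
    · have hle := card_rationalPoints_linearForm_mul_le_of_not_isLineFree (l := l) hgfree
      have hgle := ih (by lia) hg0 hg hgv
      lia

end Conclusion

/-- For `q ≥ 5`, a plane quintic over `F_q` passing through a degree-3 closed point not on
any `F_q`-rational line has at most `4q + 2` rational points. -/
theorem stmt_16 (q : ℕ) (hq : IsPrimePow q) (hq5 : 5 ≤ q)
    (F E : Type) [Field F] [Fintype F] [Field E] [Fintype E] [Algebra F E]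
    (hF : Fintype.card F = q) (hE : Fintype.card E = q ^ 3)
    -- `v` represents a degree-3 closed point of `P²`: its three Frobenius conjugates are
    -- pairwise distinct and non-collinear (equivalently, linearly independent).
    (v : Fin 3 → E)
    (hv : LinearIndependent E ![v, fun i => v i ^ q, fun i => v i ^ q ^ 2]) :
    ∀ f : MvPolynomial (Fin 3) F, f ≠ 0 → f.IsHomogeneous 5 →
      MvPolynomial.aeval v f = 0 →
      {x : Projectivization F (Fin 3 → F) | MvPolynomial.eval x.rep f = 0}.ncard ≤ 4 * q + 2 := by
  intro f hf0 hf hfv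
  subst hF
  rw [Set.ncard_eq_toFinset_card]
  rw [← Nat.card_eq_fintype_card] at hq5 ⊢
  exact stmt_16_general (linearIndependent_of_linearIndependent_frobenius hv) hq5 hf0 hf hfv
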